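/- Let k ≥ 1 be an integer and let 0 ≤ ρ ≤ 1 − 1/(2k). In the polynomial ring ℝ[F₀, F₁, G₀, G₁], the polynomial (1/4 + ρ/4)·(F₀^{2k} G₀^{2k} + F₁^{2k} G₁^{2k}) + (1/4 − ρ/4)·(F₀^{2k} G₁^{2k} + F₁^{2k} G₀^{2k}) − ((F₀+F₁)/2)^{2k} · ((G₀+G₁)/2)^{2k} is a sum of squares of polynomials, each of degree at most 2k. -/

import Mathlib

/-!
Write `N = 2k`, `F₀, F₁ = a ± b`, `G₀, G₁ = c ± e`, and put `r = ac + be`, `w = ac - be`,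
`d = ae + bc`. The monomials pair up as `F₀G₀, F₁G₁ = r ± d` and `F₀G₁, F₁G₀ = w ± s`, both pairs
having the same product `r² - d²`. Hence, with `T w c n` the Chebyshev polynomial homogenised so
that `2 T((x+y)/2, xy, n) = xⁿ + yⁿ`, the polynomial in question is
`(1+ρ)/2 · T(r, r²-d², N) + (1-ρ)/2 · T(w, r²-d², N) - (ac)^N`.

It is affine in `ρ`, so the two endpoints suffice. At `ρ = 0` it factors, up to the subtracted
term, into a form in `a, b` and a form in `c, e` (`independent_mem_sosCone`). At `ρ = 1 - 1/(2k)`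
(`extremal_mem_sosCone`) there are two ingredients.

* Dependence on `d`. The convolution identity `chebT_sub` shows that `T(w, r²-d², n) - T(w, r², n)`
  is a combination with nonnegative coefficients of the `d^(2i) r^(2j) T(w, r², l)`, and the same
  combination serves for `w = r`, where it gives `T(r, r²-d², n) - rⁿ`. For `n = N` every `l` that
  occurs is even, and `r^(2l) + T(w, r², 2l) = 2 T(w, r², l)²`. So the part of
  `T(r, r²-d², N) + T(w, r²-d², N)` that involves `d` is a sum of squares (`cheb_sub_mem_sosCone`).
* The part at `d = 0`. This is a binary form in `ac` and `-be`, and it is enough that it be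
  nonnegative (`mem_sosCone_of_nonneg`). Dehomogenised it is
  `(2N-1)(1-m)^N + T(1+m, (1-m)², N) - 2N`. For `m ≥ 0` both terms are bounded below by their
  first-order expansions in `m`, the first by Bernoulli's inequality; for `m < 0` the substitution `1 - m = 1 / cos² θ` turns it into
  `n cosⁿ θ ≤ n - 1 + cos nθ` with `n = 2N` (`n_mul_cos_pow_le`).
-/

open MvPolynomial
open scoped NNReal

/-! ### Homogenised Chebyshev polynomials -/

/-- The Chebyshev polynomial of the first kind, homogenised by a parameter `c` of weight two:
`chebT w c n = c^(n/2) T_n(w / √c)`, defined by its recurrence in any commutative ring. -/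
def chebT {R : Type*} [CommRing R] (w c : R) : ℕ → R
  | 0 => 1
  | 1 => w
  | n + 2 => 2 * w * chebT w c (n + 1) - c * chebT w c n

/-- The Chebyshev polynomial of the second kind, homogenised in the same way:
`chebU w c n = c^(n/2) U_n(w / √c)`. -/
def chebU {R : Type*} [CommRing R] (w c : R) : ℕ → R
  | 0 => 1
  | 1 => 2 * w
  | n + 2 => 2 * w * chebU w c (n + 1) - c * chebU w c n

section Chebyshev

variable {R S : Type*} [CommRing R] [CommRing S]

lemma map_chebT (f : R →+* S) (w c : R) (n : ℕ) :
    f (chebT w c n) = chebT (f w) (f c) n := by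
  induction n using Nat.twoStepInduction with
  | zero => simp [chebT]
  | one => simp [chebT]
  | more n h0 h1 => simp [chebT, h0, h1, map_ofNat]

lemma two_mul_chebT {x y w : R} (h : x + y = 2 * w) (n : ℕ) :
    2 * chebT w (x * y) n = x ^ n + y ^ n := by
  induction n using Nat.twoStepInduction with
  | zero => simp [chebT]; norm_num
  | one => simp [chebT, h]
  | more n h0 h1 =>
    simp only [chebT]
    linear_combination 2 * w * h1 - x * y * h0 - (x ^ (n + 1) + y ^ (n + 1)) * h

lemma chebT_sq_self (r : R) (n : ℕ) : chebT r (r ^ 2) n = r ^ n := by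
  induction n using Nat.twoStepInduction with
  | zero => simp [chebT]
  | one => simp [chebT]
  | more n h0 h1 =>
    simp only [chebT, h0, h1]
    ring

lemma chebT_scale (s w c : R) (n : ℕ) :
    chebT (s * w) (s ^ 2 * c) n = s ^ n * chebT w c n := by
  induction n using Nat.twoStepInduction with
  | zero => simp [chebT]
  | one => simp [chebT]
  | more n h0 h1 =>
    simp only [chebT, h0, h1]
    ring

/-- The product formula `2 cos α cos β = cos (α + β) + cos (α - β)`, homogenised. -/
lemma two_mul_chebT_mul (w c : R) (l k : ℕ) :
    2 * (chebT w c l * chebT w c (l + k)) = chebT w c (2 * l + k) + c ^ l * chebT w c k := by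
  induction l using Nat.twoStepInduction generalizing k with
  | zero => simp [chebT]; ring
  | one =>
    rw [show 1 + k = k + 1 by ring, show 2 * 1 + k = k + 2 by ring]
    simp only [chebT]
    ring
  | more l h0 h1 =>
    have e1 := h1 (k + 1)
    have e0 := h0 (k + 2)
    rw [show l + 1 + (k + 1) = l + 2 + k by ring,
      show 2 * (l + 1) + (k + 1) = 2 * l + k + 2 + 1 by ring] at e1
    rw [show l + (k + 2) = l + 2 + k by ring, show 2 * l + (k + 2) = 2 * l + k + 2 by ring] at e0
    rw [show 2 * (l + 2) + k = (2 * l + k + 2) + 2 by ring]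
    have e2 : chebT w c (l + 2) = 2 * w * chebT w c (l + 1) - c * chebT w c l := rfl
    have e3 : chebT w c (2 * l + k + 2 + 2)
      = 2 * w * chebT w c (2 * l + k + 2 + 1) - c * chebT w c (2 * l + k + 2) := rfl
    have e4 : chebT w c (k + 2) = 2 * w * chebT w c (k + 1) - c * chebT w c k := rfl
    rw [e3]
    linear_combination 2 * w * e1 - c * e0 + 2 * chebT w c (l + 2 + k) * e2 - c * c ^ l * e4

lemma chebU_add_two (w c : R) (n : ℕ) :
    chebU w c (n + 2) = 2 * chebT w c (n + 2) + c * chebU w c n := by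
  induction n using Nat.twoStepInduction with
  | zero => simp [chebT, chebU]; ring
  | one => simp [chebT, chebU]; ring
  | more n h0 h1 =>
    have e1 : chebU w c (n + 2 + 2) = 2 * w * chebU w c (n + 1 + 2) - c * chebU w c (n + 2) := rfl
    have e2 : chebT w c (n + 2 + 2) = 2 * w * chebT w c (n + 1 + 2) - c * chebT w c (n + 2) := rfl
    have e3 : chebU w c (n + 2) = 2 * w * chebU w c (n + 1) - c * chebU w c n := rfl
    linear_combination e1 - 2 * e2 + 2 * w * h1 - c * h0 - c * e3

/-- Perturbing the parameter from `c` to `c - e` changes `chebT` by `e` times a convolution. In terms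
of generating functions, `1 - 2wz + (c - e)z²` differs from `1 - 2wz + cz²`, the reciprocal of the
generating function of `chebU w c`, by `e z²`. -/
lemma chebT_sub (w c e : R) (n : ℕ) :
    chebT w (c - e) (n + 2) = chebT w c (n + 2)
      + e * ∑ a ∈ Finset.range (n + 1), chebU w c (n - a) * chebT w (c - e) a := by
  induction n using Nat.twoStepInduction with
  | zero => simp [chebT, chebU]; ring
  | one => simp [chebT, chebU, Finset.sum_range_succ]; ring
  | more n h0 h1 =>
    have e1 : chebT w (c - e) (n + 2 + 2)
      = 2 * w * chebT w (c - e) (n + 1 + 2) - (c - e) * chebT w (c - e) (n + 2) := rfl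
    have e2 : chebT w c (n + 2 + 2) = 2 * w * chebT w c (n + 1 + 2) - c * chebT w c (n + 2) := rfl
    have key : ∑ a ∈ Finset.range (n + 2 + 1), chebU w c (n + 2 - a) * chebT w (c - e) a
        = 2 * w * ∑ a ∈ Finset.range (n + 1 + 1), chebU w c (n + 1 - a) * chebT w (c - e) a
          - c * ∑ a ∈ Finset.range (n + 1), chebU w c (n - a) * chebT w (c - e) a
          + chebT w (c - e) (n + 2) := by
      rw [Finset.sum_range_succ, Finset.sum_range_succ, Finset.sum_range_succ _ (n + 1)]
      have : ∀ a ∈ Finset.range (n + 1), chebU w c (n + 2 - a) * chebT w (c - e) a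
          = 2 * w * (chebU w c (n + 1 - a) * chebT w (c - e) a)
            - c * (chebU w c (n - a) * chebT w (c - e) a) := by
        intro a ha
        have ha' : a ≤ n := by simpa [Nat.lt_succ_iff] using ha
        obtain ⟨b, rfl⟩ := Nat.exists_eq_add_of_le ha'
        rw [show a + b + 2 - a = b + 2 by omega, show a + b + 1 - a = b + 1 by omega,
          show a + b - a = b by omega]
        simp only [chebU]
        ring
      rw [Finset.sum_congr rfl this, Finset.sum_sub_distrib, ← Finset.mul_sum, ← Finset.mul_sum,
        show n + 2 - (n + 1) = 1 by omega, show n + 1 - (n + 1) = 0 by omega,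
        show n + 2 - (n + 2) = 0 by omega]
      simp only [chebU]
      ring
    rw [e1, h1, e2, key]
    linear_combination (-c) * h0

end Chebyshev

/-! ### A multiplicative cone of Chebyshev products -/

section Cone

variable {P : Type*} [CommRing P] [Algebra ℝ≥0 P]

/-- The nonnegative combinations of the products `d^(2i) r^(2j) T(w, r², l)` of total weight
`2i + 2j + l = n`. The ring is arbitrary so that it may be a product ring `R × R`, in which an
element of the cone records one combination evaluated at two values of `w`. -/
def chebCone (r w d : P) (n : ℕ) : Submodule ℝ≥0 P :=
  Submodule.span ℝ≥0 {p | ∃ i j l : ℕ, 2 * i + 2 * j + l = n ∧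
    p = d ^ (2 * i) * r ^ (2 * j) * chebT w (r ^ 2) l}

lemma chebCone_gen (r w d : P) {n : ℕ} (i j l : ℕ) (h : 2 * i + 2 * j + l = n) :
    d ^ (2 * i) * r ^ (2 * j) * chebT w (r ^ 2) l ∈ chebCone r w d n :=
  Submodule.subset_span ⟨i, j, l, h, rfl⟩

/-- The cones multiply, because the product formula for `chebT` has positive coefficients. -/
lemma chebCone_mul (r w d : P) {m n : ℕ} {x y : P} (hx : x ∈ chebCone r w d m)
    (hy : y ∈ chebCone r w d n) : x * y ∈ chebCone r w d (m + n) := by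
  have h := Submodule.mul_mem_mul hx hy
  rw [chebCone, chebCone, Submodule.span_mul_span] at h
  refine (Submodule.span_le.2 ?_) h
  have key : ∀ i j l i' j' k m n : ℕ, 2 * i + 2 * j + l = m → 2 * i' + 2 * j' + (l + k) = n →
      d ^ (2 * i) * r ^ (2 * j) * chebT w (r ^ 2) l
        * (d ^ (2 * i') * r ^ (2 * j') * chebT w (r ^ 2) (l + k)) ∈ chebCone r w d (m + n) := by
    intro i j l i' j' k m n hm hn
    have h1 := chebCone_gen r w d (n := m + n) (i + i') (j + j') (2 * l + k) (by omega)
    have h2 := chebCone_gen r w d (n := m + n) (i + i') (j + j' + l) k (by omega)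
    have h3 := Submodule.smul_mem _ (1 / 2 : ℝ≥0) (add_mem h1 h2)
    convert h3 using 1
    have e := two_mul_chebT_mul w (r ^ 2) l k
    have e' : d ^ (2 * (i + i')) * r ^ (2 * (j + j')) * chebT w (r ^ 2) (2 * l + k)
        + d ^ (2 * (i + i')) * r ^ (2 * (j + j' + l)) * chebT w (r ^ 2) k
        = (2 : ℝ≥0) • (d ^ (2 * i) * r ^ (2 * j) * chebT w (r ^ 2) l
        * (d ^ (2 * i') * r ^ (2 * j') * chebT w (r ^ 2) (l + k))) := by
      rw [ofNat_smul_eq_nsmul, nsmul_eq_mul]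
      push_cast
      linear_combination (-d ^ (2 * (i + i')) * r ^ (2 * (j + j'))) * e
    rw [e', smul_smul]
    norm_num
  rintro _ ⟨_, ⟨i, j, l, hm, rfl⟩, _, ⟨i', j', l', hn, rfl⟩, rfl⟩
  rcases le_total l l' with hl | hl
  · obtain ⟨k, rfl⟩ := Nat.exists_eq_add_of_le hl
    exact key _ _ _ _ _ _ _ _ hm hn
  · obtain ⟨k, rfl⟩ := Nat.exists_eq_add_of_le hl
    have := key _ _ _ _ _ _ _ _ hn hm
    rw [add_comm n m, mul_comm] at this
    exact this

lemma chebU_mem_chebCone (r w d : P) (n : ℕ) : chebU w (r ^ 2) n ∈ chebCone r w d n := by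
  induction n using Nat.twoStepInduction with
  | zero => simpa [chebT, chebU] using chebCone_gen r w d (n := 0) 0 0 0 rfl
  | one =>
    have h := chebCone_gen r w d (n := 1) 0 0 1 rfl
    simpa [chebT, chebU, two_mul] using add_mem h h
  | more n h0 h1 =>
    rw [chebU_add_two, two_mul]
    have h := chebCone_gen r w d (n := n + 2) 0 0 (n + 2) (by omega)
    have h' := chebCone_mul r w d h0 (chebCone_gen r w d (n := 2) 0 1 0 rfl)
    simp only [mul_zero, pow_zero, one_mul] at h
    refine add_mem (add_mem h h) ?_
    simpa [chebT, mul_comm] using h'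

lemma chebT_sub_mem_chebCone (r w d : P) (n : ℕ) :
    chebT w (r ^ 2 - d ^ 2) n - chebT w (r ^ 2) n ∈ chebCone r w d n := by
  induction n using Nat.strong_induction_on with
  | _ n ih =>
    match n with
    | 0 => simp [chebT]
    | 1 => simp [chebT]
    | n + 2 =>
      rw [chebT_sub, add_sub_cancel_left, Finset.mul_sum]
      refine Submodule.sum_mem _ fun a ha => ?_
      have ha' : a ≤ n := by simpa [Nat.lt_succ_iff] using ha
      have h1 : chebT w (r ^ 2 - d ^ 2) a ∈ chebCone r w d a := by
        have := add_mem (ih a (by omega)) (chebCone_gen r w d 0 0 a (by omega))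
        simpa using this
      have h2 := chebCone_mul r w d (chebCone_gen r w d (n := 2) 1 0 0 rfl)
        (chebCone_mul r w d (chebU_mem_chebCone r w d (n - a)) h1)
      rw [show 2 + (n - a + a) = n + 2 by omega] at h2
      simpa [chebT] using h2

end Cone

/-! ### The inequalities behind the binary form -/

/-- On the first half-period `nθ ≤ π` the inequality follows by induction on `n`, simultaneously
with bounds on `sin nθ` and `cos nθ` that control the addition formulas. -/
lemma n_mul_cos_pow_le_aux (n : ℕ) (hn : 1 ≤ n) (θ : ℝ) (h0 : 0 ≤ θ) (h : n * θ ≤ Real.pi)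
    (h2 : θ ≤ Real.pi / 2) :
    Real.sin (n * θ) ≤ n * Real.sin θ * Real.cos θ ^ (n - 1) ∧
      Real.cos (n * θ) ≤ Real.cos θ ^ n ∧ n * Real.cos θ ^ n ≤ n - 1 + Real.cos (n * θ) := by
  induction n, hn using Nat.le_induction with
  | base => simp
  | succ n hn ih =>
    obtain ⟨m, rfl⟩ : ∃ m, n = m + 1 := ⟨n - 1, by omega⟩
    have hle : ((m + 1 : ℕ) : ℝ) * θ ≤ Real.pi := by
      refine le_trans ?_ h
      push_cast
      nlinarith
    obtain ⟨h3, h4, h5⟩ := ih hle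
    have hs : 0 ≤ Real.sin θ := Real.sin_nonneg_of_nonneg_of_le_pi h0 (by linarith [Real.pi_pos])
    have hc : 0 ≤ Real.cos θ := Real.cos_nonneg_of_neg_pi_div_two_le_of_le (by linarith [Real.pi_pos]) h2
    have hS : 0 ≤ Real.sin ((m + 1 : ℕ) * θ) :=
      Real.sin_nonneg_of_nonneg_of_le_pi (by positivity) hle
    have hc1 := Real.cos_le_one θ
    have hsc := Real.sin_sq_add_cos_sq θ
    have es : Real.sin ((m + 1 + 1 : ℕ) * θ) = Real.sin ((m + 1 : ℕ) * θ) * Real.cos θ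
        + Real.cos ((m + 1 : ℕ) * θ) * Real.sin θ := by
      rw [← Real.sin_add]; push_cast; ring_nf
    have ec : Real.cos ((m + 1 + 1 : ℕ) * θ) = Real.cos ((m + 1 : ℕ) * θ) * Real.cos θ
        - Real.sin ((m + 1 : ℕ) * θ) * Real.sin θ := by
      rw [← Real.cos_add]; push_cast; ring_nf
    rw [es, ec]
    generalize Real.sin ((m + 1 : ℕ) * θ) = S at *
    generalize Real.cos ((m + 1 : ℕ) * θ) = K at *
    generalize Real.sin θ = s at *
    generalize Real.cos θ = c at *
    simp only [Nat.add_sub_cancel] at *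
    have k1 := mul_le_mul_of_nonneg_right h3 hc
    have k2 := mul_le_mul_of_nonneg_right h4 hs
    have k3 := mul_le_mul_of_nonneg_right h4 hc
    have k4 := mul_nonneg hS hs
    have k5 := mul_le_mul_of_nonneg_right h5 hc
    have k6 := mul_le_mul_of_nonneg_right h3 hs
    push_cast at *
    refine ⟨?_, ?_, ?_⟩
    · rw [pow_succ c m]  at *
      nlinarith
    · rw [pow_succ]; linarith
    · have hb : 0 ≤ (1 - c) * (((m:ℝ) + 1) * (1 - c ^ m)) := by
        have : c ^ m ≤ 1 := pow_le_one₀ hc hc1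
        exact mul_nonneg (by linarith) (mul_nonneg (by positivity) (by linarith))
      have hd : 0 ≤ c * ((1 - c ^ (m + 1)) - ((m:ℝ) + 1) * c ^ m * (1 - c)) := by
        refine mul_nonneg hc ?_
        have hg := mul_geom_sum c (m + 1)
        have hl : ((m:ℝ) + 1) * c ^ m ≤ ∑ i ∈ Finset.range (m + 1), c ^ i := by
          have : ∑ i ∈ Finset.range (m + 1), c ^ m ≤ ∑ i ∈ Finset.range (m + 1), c ^ i :=
            Finset.sum_le_sum fun i hi =>
              pow_le_pow_of_le_one hc hc1 (by simpa [Nat.lt_succ_iff] using hi)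
          simpa using this
        nlinarith
      have e : s * s = 1 - c * c := by linarith
      have k6' : S * s ≤ ((m:ℝ) + 1) * (1 - c * c) * c ^ m := by
        calc S * s ≤ _ := k6
          _ = ((m:ℝ) + 1) * (s * s) * c ^ m := by ring
          _ = _ := by rw [e]
      rw [pow_succ c m] at *
      rw [pow_succ c (m + 1), pow_succ c m]
      nlinarith

/-- Past the first half-period the left-hand side has already dropped to at most `n - 2`, by
monotonicity of `cos` and the case `θ = π / n`. -/
lemma n_mul_cos_pow_le (n : ℕ) (hn : 1 ≤ n) (θ : ℝ) (h0 : 0 ≤ θ) (h2 : θ ≤ Real.pi / 2) :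
    n * Real.cos θ ^ n ≤ n - 1 + Real.cos (n * θ) := by
  have hn' : (1:ℝ) ≤ n := by exact_mod_cast hn
  rcases le_or_gt (n * θ) Real.pi with h | h
  · exact (n_mul_cos_pow_le_aux n hn θ h0 h h2).2.2
  · have hn2 : 2 ≤ n := by
      by_contra hcon
      have : n = 1 := by omega
      subst this
      norm_num at h
      linarith [Real.pi_pos]
    have hn2' : (2:ℝ) ≤ n := by exact_mod_cast hn2
    have hθ : Real.pi / n ≤ θ := by
      rw [div_le_iff₀ (by linarith)]; linarith
    have e : n * (Real.pi / n) = Real.pi := by field_simp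
    have h3 := (n_mul_cos_pow_le_aux n hn (Real.pi / n) (by positivity) e.le (hθ.trans h2)).2.2
    rw [e, Real.cos_pi] at h3
    have hc : 0 ≤ Real.cos θ :=
      Real.cos_nonneg_of_neg_pi_div_two_le_of_le (by linarith [Real.pi_pos]) h2
    have hcc : Real.cos θ ≤ Real.cos (Real.pi / n) :=
      Real.cos_le_cos_of_nonneg_of_le_pi (by positivity) (by linarith [Real.pi_pos]) hθ
    have := pow_le_pow_left₀ hc hcc n
    nlinarith [Real.neg_one_le_cos (n * θ)]

/-- The even and odd parts of `(1 + x)ⁿ` dominate their expansions truncated at order two. -/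
lemma one_add_le_even_part (n : ℕ) (x : ℝ) (hx : 0 ≤ x) :
    1 + n * (n - 1) / 2 * x ^ 2 ≤ ((1 + x) ^ n + (1 - x) ^ n) / 2 ∧
      n * x ≤ ((1 + x) ^ n - (1 - x) ^ n) / 2 := by
  induction n with
  | zero => simp
  | succ n ih =>
    obtain ⟨h1, h2⟩ := ih
    have e1 : ((1 + x) ^ (n + 1) + (1 - x) ^ (n + 1)) / 2
      = ((1 + x) ^ n + (1 - x) ^ n) / 2 + x * (((1 + x) ^ n - (1 - x) ^ n) / 2) := by ring
    have e2 : ((1 + x) ^ (n + 1) - (1 - x) ^ (n + 1)) / 2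
      = ((1 + x) ^ n - (1 - x) ^ n) / 2 + x * (((1 + x) ^ n + (1 - x) ^ n) / 2) := by ring
    rw [e1, e2]
    have h3 : (1:ℝ) ≤ ((1 + x) ^ n + (1 - x) ^ n) / 2 := by
      refine le_trans ?_ h1
      rcases Nat.eq_zero_or_pos n with rfl | hn
      · simp
      · have : (1:ℝ) ≤ n := by exact_mod_cast hn
        have : 0 ≤ (n:ℝ) * (n - 1) / 2 * x ^ 2 := by
          have : 0 ≤ (n:ℝ) - 1 := by linarith
          positivity
        linarith
    have h4 := mul_le_mul_of_nonneg_left h2 hx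
    have h5 := mul_le_mul_of_nonneg_left h3 hx
    push_cast
    constructor <;> nlinarith

/-- Bernoulli's inequality for even exponents holds without a lower bound on `-m`. -/
lemma one_sub_mul_le_pow_even (k : ℕ) (m : ℝ) : 1 - (2 * k : ℕ) * m ≤ (1 - m) ^ (2 * k) := by
  rcases le_or_gt m 2 with h | h
  · have := one_add_mul_le_pow (a := -m) (by linarith) (2 * k)
    simpa [sub_eq_add_neg] using this
  · rcases Nat.eq_zero_or_pos k with rfl | hk
    · simp
    · have : (1:ℝ) ≤ k := by exact_mod_cast hk
      have h2 : 0 ≤ (1 - m) ^ (2 * k) := (even_two_mul k).pow_nonneg _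
      push_cast
      nlinarith

/-! ### Nonnegative polynomials in one variable -/

/-- A nonnegative real polynomial of degree at most `2n` is a sum of squares of polynomials of degree
at most `n`: split off the square of a linear factor at a real root, or a factor `(X - u)² + v²` at a
pair of nonreal roots. -/
lemma mem_span_sq_of_nonneg (n : ℕ) : ∀ f : Polynomial ℝ, f.natDegree ≤ 2 * n →
    (∀ x, 0 ≤ f.eval x) →
    f ∈ Submodule.span ℝ≥0 {p : Polynomial ℝ | ∃ q : Polynomial ℝ, q.natDegree ≤ n ∧ p = q ^ 2} := by
  have hconst : ∀ (n : ℕ) (f : Polynomial ℝ), f.natDegree = 0 → (∀ x, 0 ≤ f.eval x) →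
    f ∈ Submodule.span ℝ≥0
      {p : Polynomial ℝ | ∃ q : Polynomial ℝ, q.natDegree ≤ n ∧ p = q ^ 2} := by
    intro n f hf hpos
    rw [Polynomial.eq_C_of_natDegree_eq_zero hf] at hpos ⊢
    have h0 : 0 ≤ f.coeff 0 := by simpa using hpos 0
    refine Submodule.subset_span ⟨Polynomial.C (√(f.coeff 0)), by simp, ?_⟩
    rw [← Polynomial.C_pow, Real.sq_sqrt h0]
  -- multiplication by the square of a polynomial of degree at most one
  have hmul : ∀ (n : ℕ) (u f : Polynomial ℝ), u.natDegree ≤ 1 →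
      f ∈ Submodule.span ℝ≥0
        {p : Polynomial ℝ | ∃ q : Polynomial ℝ, q.natDegree ≤ n ∧ p = q ^ 2} →
      u ^ 2 * f ∈ Submodule.span ℝ≥0
        {p : Polynomial ℝ | ∃ q : Polynomial ℝ, q.natDegree ≤ n + 1 ∧ p = q ^ 2} := by
    intro n u f hu hf
    induction hf using Submodule.span_induction with
    | mem x hx =>
      obtain ⟨q, hq, rfl⟩ := hx
      refine Submodule.subset_span ⟨u * q, ?_, by ring⟩
      exact Polynomial.natDegree_mul_le.trans (by omega)
    | zero => simp
    | add x y _ _ hx hy => rw [mul_add]; exact add_mem hx hy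
    | smul a x _ hx => rw [mul_smul_comm]; exact Submodule.smul_mem _ _ hx
  induction n with
  | zero => exact fun f hf hpos => hconst 0 f (by omega) hpos
  | succ n ih =>
    intro f hf hpos
    by_cases hd : f.natDegree = 0
    · exact hconst _ f hd hpos
    have hf0 : f ≠ 0 := by rintro rfl; simp at hd
    obtain ⟨z, hz⟩ : ∃ z : ℂ, Polynomial.aeval z f = 0 :=
      IsAlgClosed.exists_aeval_eq_zero _ f (Polynomial.natDegree_pos_iff_degree_pos.1 (by omega)).ne'
    by_cases him : z.im = 0
    · set a := z.re with ha
      have hza : z = (a : ℂ) := Complex.ext rfl (by simpa using him)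
      have hroot : f.IsRoot a := by
        have : Polynomial.aeval (algebraMap ℝ ℂ a) f = 0 := by simpa [hza] using hz
        rw [Polynomial.aeval_algebraMap_apply] at this
        simpa using this
      obtain ⟨g, rfl⟩ := Polynomial.dvd_iff_isRoot.2 hroot
      -- the real root `a` is a minimum, so the derivative vanishes there
      have hga : g.IsRoot a := by
        have hmin : IsLocalMin (fun x => ((Polynomial.X - Polynomial.C a) * g).eval x) a :=
          Filter.Eventually.of_forall fun x => by
            have := hpos x
            simpa [hroot.eq_zero] using this
        have := hmin.deriv_eq_zero
        rw [Polynomial.deriv] at this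
        simpa using this
      obtain ⟨h, rfl⟩ := Polynomial.dvd_iff_isRoot.2 hga
      have hh0 : h ≠ 0 := by rintro rfl; simp at hf0
      have hX : (Polynomial.X - Polynomial.C a) ≠ 0 := Polynomial.X_sub_C_ne_zero a
      have hdeg : h.natDegree ≤ 2 * n := by
        rw [Polynomial.natDegree_mul hX (mul_ne_zero hX hh0), Polynomial.natDegree_mul hX hh0,
          Polynomial.natDegree_X_sub_C] at hf
        omega
      have hpos' : ∀ x ∈ ({a}ᶜ : Set ℝ), 0 ≤ h.eval x := by
        intro x hx
        have hxa : 0 < (x - a) ^ 2 := by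
          have : x - a ≠ 0 := sub_ne_zero.2 hx
          positivity
        have := hpos x
        rw [← mul_assoc, ← sq] at this
        simp only [Polynomial.eval_mul, Polynomial.eval_pow, Polynomial.eval_sub,
          Polynomial.eval_X, Polynomial.eval_C] at this
        exact nonneg_of_mul_nonneg_right this hxa
      have hposh : ∀ x, 0 ≤ h.eval x := by
        have hcl : IsClosed {x : ℝ | 0 ≤ h.eval x} :=
          isClosed_le continuous_const h.continuous
        have := hcl.closure_subset_iff.2 hpos'
        rw [(dense_compl_singleton a).closure_eq] at this
        exact fun x => this (Set.mem_univ x)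
      rw [← mul_assoc, ← sq]
      exact hmul n _ _ (Polynomial.natDegree_X_sub_C a).le (ih h hdeg hposh)
    · obtain ⟨g, hg⟩ := f.quadratic_dvd_of_aeval_eq_zero_im_ne_zero hz him
      have hq : Polynomial.X ^ 2 - Polynomial.C (2 * z.re) * Polynomial.X + Polynomial.C (‖z‖ ^ 2)
          = (Polynomial.X - Polynomial.C z.re) ^ 2 + (Polynomial.C z.im) ^ 2 := by
        rw [Complex.sq_norm, Complex.normSq_apply]
        simp only [Polynomial.C_add, Polynomial.C_mul, Polynomial.C_ofNat]
        ring
      have hq2 : (Polynomial.X ^ 2 - Polynomial.C (2 * z.re) * Polynomial.X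
          + Polynomial.C (‖z‖ ^ 2)).natDegree = 2 := by compute_degree!
      have hg0 : g ≠ 0 := by rintro rfl; simp [hg] at hf0
      have hdeg : g.natDegree ≤ 2 * n := by
        rw [hg, Polynomial.natDegree_mul (by intro h; rw [h] at hq2; simp at hq2) hg0, hq2] at hf
        omega
      rw [hq] at hg
      have hposg : ∀ x, 0 ≤ g.eval x := by
        intro x
        have := hpos x
        rw [hg] at this
        simp only [Polynomial.eval_mul, Polynomial.eval_pow, Polynomial.eval_sub,
          Polynomial.eval_X, Polynomial.eval_C, Polynomial.eval_add] at this
        exact nonneg_of_mul_nonneg_right this (by positivity)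
      rw [hg, add_mul]
      exact add_mem (hmul n _ _ (Polynomial.natDegree_X_sub_C _).le (ih g hdeg hposg))
        (hmul n _ _ (by simp) (ih g hdeg hposg))

/-! ### The binary form at `d = 0`, dehomogenised -/

lemma chebT_base_nonneg (k : ℕ) (m : ℝ) :
    0 ≤ (4 * k - 1) * (1 - m) ^ (2 * k) + chebT (1 + m) ((1 - m) ^ 2) (2 * k) - 4 * k := by
  rcases Nat.eq_zero_or_pos k with rfl | hk
  · simp [chebT]
  have hk1 : (1:ℝ) ≤ k := by exact_mod_cast hk
  rcases le_or_gt 0 m with hm | hm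
  · -- with `m = x ^ 2`, compare both terms with their first-order expansions in `m`
    obtain ⟨x, hx, rfl⟩ : ∃ x : ℝ, 0 ≤ x ∧ m = x ^ 2 :=
      ⟨√m, Real.sqrt_nonneg m, (Real.sq_sqrt hm).symm⟩
    have h1 := one_sub_mul_le_pow_even k (x ^ 2)
    have h2 := (one_add_le_even_part (2 * (2 * k)) x hx).1
    have h3 := two_mul_chebT (x := (1 + x) ^ 2) (y := (1 - x) ^ 2) (w := 1 + x ^ 2) (by ring)
      (2 * k)
    rw [← pow_mul, ← pow_mul, show (1 + x) ^ 2 * (1 - x) ^ 2 = (1 - x ^ 2) ^ 2 by ring] at h3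
    have h4 := mul_le_mul_of_nonneg_left h1 (by linarith : (0:ℝ) ≤ 4 * k - 1)
    push_cast at *
    nlinarith
  · -- with `1 / (1 - m) = cos θ ^ 2`, this is the trigonometric inequality
    have hr : 0 < 1 - m := by linarith
    set r := 1 - m with hrdef
    have hr1 : 1 ≤ r := by linarith
    set θ := Real.arccos (1 / √r) with hθ
    have hsr : 1 ≤ √r := Real.one_le_sqrt.2 hr1
    have hcos : Real.cos θ = 1 / √r := by
      apply Real.cos_arccos
      · have : (0:ℝ) ≤ 1 / √r := by positivity
        linarith
      · exact (div_le_one (by linarith)).2 hsr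
    have hcos2 : Real.cos θ ^ 2 = 1 / r := by rw [hcos, div_pow, Real.sq_sqrt hr.le, one_pow]
    have htrig := n_mul_cos_pow_le (2 * (2 * k)) (by omega) θ (Real.arccos_nonneg _)
      (Real.arccos_le_pi_div_two.2 (by positivity))
    rw [pow_mul, hcos2] at htrig
    have hT : chebT (1 + m) (r ^ 2) (2 * k) = r ^ (2 * k) * Real.cos ((2 * (2 * k) : ℕ) * θ) := by
      have hw : 1 + m = r * Real.cos (2 * θ) := by
        rw [Real.cos_two_mul, hcos2]
        field_simp
        rw [hrdef]; ring
      have hc : ∀ (φ : ℝ) (n : ℕ), chebT (Real.cos φ) 1 n = Real.cos (n * φ) := by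
        intro φ n
        induction n using Nat.twoStepInduction with
        | zero => simp [chebT]
        | one => simp [chebT]
        | more n h0 h1 =>
          simp only [chebT, h0, h1]
          have e1 := Real.cos_add ((n + 1) * φ) φ
          have e2 := Real.cos_sub ((n + 1) * φ) φ
          rw [show (n + 1) * φ + φ = (n + 2) * φ by ring] at e1
          rw [show (n + 1) * φ - φ = n * φ by ring] at e2
          push_cast
          linear_combination -e1 - e2
      rw [hw, ← mul_one (r ^ 2), chebT_scale, hc]
      push_cast
      ring_nf
    have hrk : 0 < r ^ (2 * k) := by positivity
    have := mul_le_mul_of_nonneg_left htrig hrk.le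
    rw [one_div, inv_pow, mul_left_comm, mul_inv_cancel₀ hrk.ne'] at this
    rw [hT]
    push_cast at *
    nlinarith

/-! ### Sums of squares of forms -/

section SOS

/-- The sums of squares of forms of degree `n`, encoded as the `ℝ≥0`-span of the squares; a
nonnegative coefficient is absorbed into the square through its square root. -/
noncomputable def sosCone (σ : Type*) (n : ℕ) : Submodule ℝ≥0 (MvPolynomial σ ℝ) :=
  Submodule.span ℝ≥0 {p | ∃ q : MvPolynomial σ ℝ, q.IsHomogeneous n ∧ p = q ^ 2}

variable {σ τ : Type*}

lemma sq_mem_sosCone {n : ℕ} {q : MvPolynomial σ ℝ} (hq : q.IsHomogeneous n) :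
    q ^ 2 ∈ sosCone σ n :=
  Submodule.subset_span ⟨q, hq, rfl⟩

lemma C_mul_mem_sosCone {n : ℕ} {p : MvPolynomial σ ℝ} (hp : p ∈ sosCone σ n) {c : ℝ}
    (hc : 0 ≤ c) : C c * p ∈ sosCone σ n := by
  have := Submodule.smul_mem _ (⟨c, hc⟩ : ℝ≥0) hp
  rw [← MvPolynomial.smul_eq_C_mul]
  exact this

lemma mul_mem_sosCone {m n : ℕ} {p q : MvPolynomial σ ℝ} (hp : p ∈ sosCone σ m)
    (hq : q ∈ sosCone σ n) : p * q ∈ sosCone σ (m + n) := by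
  have h := Submodule.mul_mem_mul hp hq
  rw [sosCone, sosCone, Submodule.span_mul_span] at h
  refine (Submodule.span_le.2 ?_) h
  rintro _ ⟨_, ⟨x, hx, rfl⟩, _, ⟨y, hy, rfl⟩, rfl⟩
  have := sq_mem_sosCone (hx.mul hy)
  rwa [mul_pow] at this

lemma exists_sum_sq_of_mem_sosCone {n : ℕ} {p : MvPolynomial σ ℝ} (hp : p ∈ sosCone σ n) :
    ∃ (m : ℕ) (q : Fin m → MvPolynomial σ ℝ),
      (∀ j, (q j).totalDegree ≤ n) ∧ p = ∑ j, (q j) ^ 2 := by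
  induction hp using Submodule.span_induction with
  | mem x hx =>
    obtain ⟨q, hq, rfl⟩ := hx
    exact ⟨1, fun _ => q, fun _ => hq.totalDegree_le, by simp⟩
  | zero => exact ⟨0, Fin.elim0, fun j => j.elim0, by simp⟩
  | add x y _ _ hx hy =>
    obtain ⟨m, q, hq, rfl⟩ := hx
    obtain ⟨m', q', hq', rfl⟩ := hy
    refine ⟨m + m', Fin.append q q', fun j => ?_, by simp [Fin.sum_univ_add]⟩
    induction j using Fin.addCases with
    | left i => simpa using hq i
    | right i => simpa using hq' i
  | smul a x _ hx =>
    obtain ⟨m, q, hq, rfl⟩ := hx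
    refine ⟨m, fun j => C (√(a : ℝ)) * q j, fun j => ?_, ?_⟩
    · exact (totalDegree_mul _ _).trans (by simpa using hq j)
    · simp only [mul_pow, ← C_pow, ← Finset.mul_sum]
      rw [Real.sq_sqrt a.coe_nonneg, ← MvPolynomial.smul_eq_C_mul]
      rfl

/-- A binary form of degree `2k` that is nonnegative on the chart `X 1 = 1` is a sum of squares of
forms of degree `k`. -/
lemma mem_sosCone_of_nonneg {k : ℕ} {G : MvPolynomial (Fin 2) ℝ} (hG : G.IsHomogeneous (2 * k))
    (hpos : ∀ x : ℝ, 0 ≤ eval ![x, 1] G) : G ∈ sosCone (Fin 2) k := by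
  set f : Polynomial ℝ := aeval ![Polynomial.X, 1] G with hf
  have hGf : f.homogenize (2 * k) = G := Polynomial.homogenize_eq_of_isHomogeneous hG rfl
  have hdeg : f.natDegree ≤ 2 * k := by
    rw [hf, aeval_def, eval₂_eq']
    refine Polynomial.natDegree_sum_le_of_forall_le _ _ fun d hd => ?_
    have := hG.degree_eq_sum_deg_support hd
    rw [Polynomial.algebraMap_eq]
    refine (Polynomial.natDegree_C_mul_le _ _).trans ?_
    have hd2 : d 0 + d 1 = 2 * k := by
      simp [this, ← Finsupp.degree_apply, Finsupp.degree_eq_sum]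
    simp [Fin.prod_univ_two]
    omega
  have hfpos : ∀ x, 0 ≤ f.eval x := by
    intro x
    have h : f.eval x = eval ![x, 1] G := by
      rw [hf, aeval_def, ← Polynomial.coe_evalRingHom, MvPolynomial.hom_eval₂, eval₂_eq', eval_eq']
      simp [Fin.prod_univ_two]
    rw [h]
    exact hpos x
  have hmem := mem_span_sq_of_nonneg k f hdeg hfpos
  rw [← hGf]
  clear_value f
  clear hf hdeg hfpos hGf
  induction hmem using Submodule.span_induction with
  | mem x hx =>
    obtain ⟨q, hq, rfl⟩ := hx
    rw [sq, two_mul, Polynomial.homogenize_mul _ _ hq hq, ← sq]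
    exact sq_mem_sosCone (Polynomial.isHomogeneous_homogenize q)
  | zero => simp
  | add x y _ _ hx hy => rw [Polynomial.homogenize_add]; exact add_mem hx hy
  | smul a x _ hx => rw [Polynomial.homogenize_smul]; exact Submodule.smul_mem _ _ hx

lemma aeval_mem_sosCone {k t : ℕ} {G : MvPolynomial σ ℝ} (hG : G ∈ sosCone σ k)
    (g : σ → MvPolynomial τ ℝ) (hg : ∀ i, (g i).IsHomogeneous t) :
    aeval g G ∈ sosCone τ (t * k) := by
  induction hG using Submodule.span_induction with
  | mem x hx =>
    obtain ⟨q, hq, rfl⟩ := hx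
    rw [map_pow]
    exact sq_mem_sosCone (hq.aeval g hg)
  | zero => simp
  | add x y _ _ hx hy => rw [map_add]; exact add_mem hx hy
  | smul a x _ hx =>
    have : aeval g (a • x) = a • aeval g x := map_smul (aeval g) (a : ℝ) x
    rw [this]; exact Submodule.smul_mem _ _ hx

lemma isHomogeneous_chebT {t : ℕ} {w c : MvPolynomial σ ℝ} (hw : w.IsHomogeneous t)
    (hc : c.IsHomogeneous (t * 2)) (n : ℕ) : (chebT w c n).IsHomogeneous (t * n) := by
  induction n using Nat.twoStepInduction with
  | zero => simpa [chebT] using isHomogeneous_one σ ℝ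
  | one => simpa [chebT] using hw
  | more n h0 h1 =>
    have h2 : (2 : MvPolynomial σ ℝ) = C 2 := (map_ofNat C 2).symm
    simp only [chebT]
    refine IsHomogeneous.sub ?_ ?_
    · have := (hw.C_mul 2).mul h1
      rw [← h2] at this
      convert! this using 1
      ring
    · convert! hc.mul h0 using 1
      ring

/-- The part at `d = 0` of the extremal form, multiplied by `4k`: here `q - p` and `q + p` play the
roles of `r` and `w`. -/
lemma base_mem_sosCone {t : ℕ} (k : ℕ) {p q : MvPolynomial σ ℝ} (hp : p.IsHomogeneous t)
    (hq : q.IsHomogeneous t) :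
    C (4 * k - 1 : ℝ) * (q - p) ^ (2 * k) + chebT (q + p) ((q - p) ^ 2) (2 * k)
      - C (4 * k : ℝ) * q ^ (2 * k) ∈ sosCone σ (t * k) := by
  have h : (C (4 * k - 1 : ℝ) * (X 1 - X 0) ^ (2 * k)
      + chebT (X 1 + X 0) ((X 1 - X 0) ^ 2) (2 * k)
      - C (4 * k : ℝ) * X 1 ^ (2 * k) : MvPolynomial (Fin 2) ℝ) ∈ sosCone (Fin 2) k := by
    apply mem_sosCone_of_nonneg
    · have h0 := isHomogeneous_X ℝ (0 : Fin 2)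
      have h1 := isHomogeneous_X ℝ (1 : Fin 2)
      have h2 := ((h1.sub h0).pow (2 * k)).C_mul (4 * k - 1)
      have h3 := isHomogeneous_chebT (h1.add h0) ((h1.sub h0).pow 2) (2 * k)
      have h4 := (h1.pow (2 * k)).C_mul (4 * k)
      rw [one_mul] at h2 h3 h4
      exact (h2.add h3).sub h4
    · intro m
      have := chebT_base_nonneg k m
      simpa [map_chebT] using this
  have h' := aeval_mem_sosCone h ![p, q] (t := t) (by intro i; fin_cases i <;> simpa)
  have e : aeval ![p, q] (chebT (X 1 + X 0) ((X 1 - X 0) ^ 2) (2 * k) : MvPolynomial (Fin 2) ℝ)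
      = chebT (q + p) ((q - p) ^ 2) (2 * k) := by
    have := map_chebT (aeval ![p, q] : MvPolynomial (Fin 2) ℝ →ₐ[ℝ] MvPolynomial σ ℝ).toRingHom
      (X 1 + X 0) ((X 1 - X 0) ^ 2) (2 * k)
    simpa using this
  rw [map_sub, map_add, e] at h'
  simpa only [map_mul, map_sub, map_pow, aeval_X, algHom_C, algebraMap_eq, Matrix.cons_val_zero,
    Matrix.cons_val_one] using h'

/-! ### The two endpoints -/

/-- An element `(α, β)` of the cone over the product ring is one combination evaluated at `w = r` and
at `w`. Both `α` and `α + β` are sums of squares, since the generators have even index and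
`r^(2l) + T(w, r², 2l) = 2 T(w, r², l)²`. -/
lemma cone_fst_snd {t k : ℕ} {r w d : MvPolynomial σ ℝ} (hr : r.IsHomogeneous t)
    (hw : w.IsHomogeneous t) (hd : d.IsHomogeneous t)
    {x : MvPolynomial σ ℝ × MvPolynomial σ ℝ}
    (hx : x ∈ chebCone (r, r) (r, w) (d, d) (2 * k)) :
    x.1 ∈ sosCone σ (t * k) ∧ x.1 + x.2 ∈ sosCone σ (t * k) := by
  induction hx using Submodule.span_induction with
  | mem x hx =>
    obtain ⟨i, j, l, h, rfl⟩ := hx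
    obtain ⟨l, rfl⟩ : ∃ a, l = 2 * a := ⟨l / 2, by omega⟩
    obtain rfl : k = i + j + l := by omega
    have e1 := map_chebT (RingHom.fst (MvPolynomial σ ℝ) (MvPolynomial σ ℝ)) (r, w) ((r, r) ^ 2)
      (2 * l)
    have e2 := map_chebT (RingHom.snd (MvPolynomial σ ℝ) (MvPolynomial σ ℝ)) (r, w) ((r, r) ^ 2)
      (2 * l)
    simp only [RingHom.coe_fst, RingHom.coe_snd, Prod.pow_fst, Prod.pow_snd,
      chebT_sq_self] at e1 e2
    simp only [Prod.fst_mul, Prod.snd_mul, Prod.pow_fst, Prod.pow_snd, e1, e2]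
    have hsq := two_mul_chebT_mul w (r ^ 2) l 0
    have hT := isHomogeneous_chebT hw (hr.pow 2) l
    have hdr := (hd.pow i).mul (hr.pow j)
    constructor
    · have := sq_mem_sosCone (hdr.mul (hr.pow l))
      rw [show t * i + t * j + t * l = t * (i + j + l) by ring] at this
      rwa [show d ^ (2 * i) * r ^ (2 * j) * r ^ (2 * l) = (d ^ i * r ^ j * r ^ l) ^ 2 by ring]
    · have := sq_mem_sosCone (hdr.mul hT)
      rw [show t * i + t * j + t * l = t * (i + j + l) by ring] at this
      have e3 : d ^ (2 * i) * r ^ (2 * j) * r ^ (2 * l)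
          + d ^ (2 * i) * r ^ (2 * j) * chebT w (r ^ 2) (2 * l)
          = (d ^ i * r ^ j * chebT w (r ^ 2) l) ^ 2 + (d ^ i * r ^ j * chebT w (r ^ 2) l) ^ 2 := by
        simp only [add_zero, chebT] at hsq
        linear_combination (-d ^ (2 * i) * r ^ (2 * j)) * hsq
      rw [e3]
      exact add_mem this this
  | zero => simp
  | add x y _ _ hx hy =>
    refine ⟨add_mem hx.1 hy.1, ?_⟩
    have := add_mem hx.2 hy.2
    rwa [add_add_add_comm] at this
  | smul a x _ hx =>
    refine ⟨Submodule.smul_mem _ a hx.1, ?_⟩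
    have := Submodule.smul_mem _ a hx.2
    rwa [smul_add] at this

/-- The part depending on `d`, both of `T(r, r²-d², 2k)` alone and of its sum with
`T(w, r²-d², 2k)`, is a sum of squares. -/
lemma cheb_sub_mem_sosCone {t : ℕ} (k : ℕ) {r w d : MvPolynomial σ ℝ} (hr : r.IsHomogeneous t)
    (hw : w.IsHomogeneous t) (hd : d.IsHomogeneous t) :
    chebT r (r ^ 2 - d ^ 2) (2 * k) - r ^ (2 * k) ∈ sosCone σ (t * k) ∧
    (chebT r (r ^ 2 - d ^ 2) (2 * k) - r ^ (2 * k))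
      + (chebT w (r ^ 2 - d ^ 2) (2 * k) - chebT w (r ^ 2) (2 * k)) ∈ sosCone σ (t * k) := by
  have h := cone_fst_snd hr hw hd (chebT_sub_mem_chebCone (r, r) (r, w) (d, d) (2 * k))
  have e (f : MvPolynomial σ ℝ × MvPolynomial σ ℝ →+* MvPolynomial σ ℝ) :
      f (chebT (r, w) ((r, r) ^ 2 - (d, d) ^ 2) (2 * k) - chebT (r, w) ((r, r) ^ 2) (2 * k))
      = chebT (f (r, w)) (f (r, r) ^ 2 - f (d, d) ^ 2) (2 * k)
        - chebT (f (r, w)) (f (r, r) ^ 2) (2 * k) := by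
    simp only [map_sub, map_chebT, map_pow]
  have e1 := e (RingHom.fst _ _)
  have e2 := e (RingHom.snd _ _)
  simp only [RingHom.coe_fst, RingHom.coe_snd, chebT_sq_self] at e1 e2
  rwa [e1, e2] at h

/-- The form at `ρ = 1 - 1/(2k)`, multiplied by `4k`. With `α, β` the parts depending on `d` of the
two Chebyshev terms, it is the binary form at `d = 0` plus `(α + β) + (4k - 2) α`. -/
lemma extremal_mem_sosCone {k : ℕ} (hk : 1 ≤ k) {a b c e : MvPolynomial σ ℝ}
    (ha : a.IsHomogeneous 1) (hb : b.IsHomogeneous 1) (hc : c.IsHomogeneous 1)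
    (he : e.IsHomogeneous 1) :
    C (4 * k - 1 : ℝ) * chebT (a * c + b * e) ((a ^ 2 - b ^ 2) * (c ^ 2 - e ^ 2)) (2 * k)
      + chebT (a * c - b * e) ((a ^ 2 - b ^ 2) * (c ^ 2 - e ^ 2)) (2 * k)
      - C (4 * k : ℝ) * (a * c) ^ (2 * k) ∈ sosCone σ (2 * k) := by
  have hk1 : (1:ℝ) ≤ k := by exact_mod_cast hk
  have hac := ha.mul hc
  have hbe := hb.mul he
  have h1 := base_mem_sosCone k hbe.neg hac
  obtain ⟨h2, h3⟩ := cheb_sub_mem_sosCone k (hac.add hbe) (hac.sub hbe)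
    ((ha.mul he).add (hb.mul hc))
  have h4 := C_mul_mem_sosCone h2 (c := 4 * k - 2) (by linarith)
  have h5 := add_mem h1 (add_mem h3 h4)
  rw [show (a * c + b * e) ^ 2 - (a * e + b * c) ^ 2 = (a ^ 2 - b ^ 2) * (c ^ 2 - e ^ 2) by ring,
    sub_neg_eq_add, ← sub_eq_add_neg] at h5
  have e1 : (C (4 * k - 1 : ℝ) : MvPolynomial σ ℝ) = C (4 * k - 2 : ℝ) + 1 := by
    rw [← C_1, ← C_add]; congr 1; ring
  rw [e1] at h5 ⊢
  convert! h5 using 1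
  ring

/-- The form at `ρ = 0`. If `x - u` and `y - v` are sums of squares, where `u` and `v` are squares,
then so is `x y - u v = (x - u)(y - v) + u (y - v) + (x - u) v`. -/
lemma independent_mem_sosCone (k : ℕ) {a b c e : MvPolynomial σ ℝ}
    (ha : a.IsHomogeneous 1) (hb : b.IsHomogeneous 1) (hc : c.IsHomogeneous 1)
    (he : e.IsHomogeneous 1) :
    chebT a (a ^ 2 - b ^ 2) (2 * k) * chebT c (c ^ 2 - e ^ 2) (2 * k) - (a * c) ^ (2 * k)
      ∈ sosCone σ (2 * k) := by
  have h1 := (cheb_sub_mem_sosCone k ha ha hb).1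
  have h2 := (cheb_sub_mem_sosCone k hc hc he).1
  have h3 := sq_mem_sosCone (ha.pow k)
  have h4 := sq_mem_sosCone (hc.pow k)
  have h5 := add_mem (add_mem (mul_mem_sosCone h1 h2) (mul_mem_sosCone h3 h2))
    (mul_mem_sosCone h1 h4)
  rw [one_mul, ← two_mul] at h5
  convert! h5 using 1
  ring

end SOS

/-- For `k ≥ 1` and `0 ≤ ρ ≤ 1 − 1/(2k)`, the polynomial
`(1/4 + ρ/4)(F₀^{2k} G₀^{2k} + F₁^{2k} G₁^{2k}) + (1/4 − ρ/4)(F₀^{2k} G₁^{2k} + F₁^{2k} G₀^{2k})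
  − ((F₀+F₁)/2)^{2k} ((G₀+G₁)/2)^{2k}`
in `ℝ[F₀,F₁,G₀,G₁]` is a sum of squares of polynomials of degree at most `2k`. -/
theorem stmt_6 (k : ℕ) (hk : 1 ≤ k) (ρ : ℝ) (hρ0 : 0 ≤ ρ) (hρ1 : ρ ≤ 1 - 1/(2*(k:ℝ))) :
    ∃ (m : ℕ) (q : Fin m → MvPolynomial (Fin 4) ℝ),
      (∀ j, (q j).totalDegree ≤ 2*k) ∧
      C (1/4 + ρ/4) * ((X 0)^(2*k) * (X 2)^(2*k) + (X 1)^(2*k) * (X 3)^(2*k))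
        + C (1/4 - ρ/4) * ((X 0)^(2*k) * (X 3)^(2*k) + (X 1)^(2*k) * (X 2)^(2*k))
        - (C (1/2 : ℝ) * (X 0 + X 1))^(2*k) * (C (1/2 : ℝ) * (X 2 + X 3))^(2*k)
      = ∑ j, (q j)^2 := by
  apply exists_sum_sq_of_mem_sosCone
  have hX (i : Fin 4) := isHomogeneous_X ℝ i
  have hhalf : (C (1 / 2 : ℝ) : MvPolynomial (Fin 4) ℝ) + C (1 / 2 : ℝ) = 1 := by
    rw [← C_add]; norm_num
  have ha := ((hX 0).add (hX 1)).C_mul (1 / 2)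
  have hb := ((hX 0).sub (hX 1)).C_mul (1 / 2)
  have hc := ((hX 2).add (hX 3)).C_mul (1 / 2)
  have he := ((hX 2).sub (hX 3)).C_mul (1 / 2)
  set a : MvPolynomial (Fin 4) ℝ := C (1 / 2) * (X 0 + X 1) with hadef
  set b : MvPolynomial (Fin 4) ℝ := C (1 / 2) * (X 0 - X 1) with hbdef
  set c : MvPolynomial (Fin 4) ℝ := C (1 / 2) * (X 2 + X 3) with hcdef
  set e : MvPolynomial (Fin 4) ℝ := C (1 / 2) * (X 2 - X 3) with hedef
  have e0 : (X 0 : MvPolynomial (Fin 4) ℝ) = a + b := by linear_combination (-X 0) * hhalf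
  have e1 : (X 1 : MvPolynomial (Fin 4) ℝ) = a - b := by linear_combination (-X 1) * hhalf
  have e2 : (X 2 : MvPolynomial (Fin 4) ℝ) = c + e := by linear_combination (-X 2) * hhalf
  have e3 : (X 3 : MvPolynomial (Fin 4) ℝ) = c - e := by linear_combination (-X 3) * hhalf
  rw [e0, e1, e2, e3]
  have h1 := extremal_mem_sosCone hk ha hb hc he
  have h2 := independent_mem_sosCone k ha hb hc he
  clear_value a b c e
  have t1 := two_mul_chebT (x := (a + b) * (c + e)) (y := (a - b) * (c - e)) (w := a * c + b * e)
    (by ring) (2 * k)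
  have t2 := two_mul_chebT (x := (a + b) * (c - e)) (y := (a - b) * (c + e)) (w := a * c - b * e)
    (by ring) (2 * k)
  have t3 := two_mul_chebT (x := a + b) (y := a - b) (w := a) (by ring) (2 * k)
  have t4 := two_mul_chebT (x := c + e) (y := c - e) (w := c) (by ring) (2 * k)
  rw [show (a + b) * (c + e) * ((a - b) * (c - e)) = (a ^ 2 - b ^ 2) * (c ^ 2 - e ^ 2) by ring,
    mul_pow, mul_pow] at t1
  rw [show (a + b) * (c - e) * ((a - b) * (c + e)) = (a ^ 2 - b ^ 2) * (c ^ 2 - e ^ 2) by ring,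
    mul_pow, mul_pow] at t2
  rw [show (a + b) * (a - b) = a ^ 2 - b ^ 2 by ring] at t3
  rw [show (c + e) * (c - e) = c ^ 2 - e ^ 2 by ring] at t4
  rw [← t1, ← t2, ← mul_pow]
  have t5 : chebT a (a ^ 2 - b ^ 2) (2 * k) * chebT c (c ^ 2 - e ^ 2) (2 * k)
      = (1 / 2 : ℝ) • (chebT (a * c + b * e) ((a ^ 2 - b ^ 2) * (c ^ 2 - e ^ 2)) (2 * k)
      + chebT (a * c - b * e) ((a ^ 2 - b ^ 2) * (c ^ 2 - e ^ 2)) (2 * k)) := by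
    have h4 : (4 : MvPolynomial (Fin 4) ℝ) ≠ 0 := by norm_num
    apply mul_left_cancel₀ h4
    rw [smul_eq_C_mul]
    linear_combination t3 * (2 * chebT c (c ^ 2 - e ^ 2) (2 * k))
      + ((a + b) ^ (2 * k) + (a - b) ^ (2 * k)) * t4 - t1 - t2
      - 2 * (chebT (a * c + b * e) ((a ^ 2 - b ^ 2) * (c ^ 2 - e ^ 2)) (2 * k)
      + chebT (a * c - b * e) ((a ^ 2 - b ^ 2) * (c ^ 2 - e ^ 2)) (2 * k)) * hhalf
  rw [t5] at h2
  have hk1 : (1:ℝ) ≤ k := by exact_mod_cast hk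
  -- `4 * k * μ` is the weight of the endpoint `1 - 1 / (2 * k)` in `ρ`; the factor `4 * k` is the one
  -- by which the form at that endpoint has been multiplied
  obtain ⟨μ, hμ⟩ : ∃ μ : ℝ, ρ = 2 * (2 * k - 1) * μ :=
    ⟨ρ / (2 * (2 * k - 1)), by
      have : (2 * k - 1 : ℝ) ≠ 0 := by linarith
      field_simp⟩
  have hμ0 : 0 ≤ μ := by
    by_contra hneg
    push Not at hneg
    nlinarith
  have hμ1 : 0 ≤ 1 - 4 * k * μ := by
    have h3 : 1 - 1 / (2 * (k:ℝ)) = (2 * k - 1) / (2 * k) := by field_simp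
    rw [h3, hμ, le_div_iff₀ (by linarith)] at hρ1
    nlinarith
  have h3 := add_mem (C_mul_mem_sosCone h1 hμ0) (C_mul_mem_sosCone h2 hμ1)
  convert! h3 using 1
  generalize chebT (a * c + b * e) _ _ = A
  generalize chebT (a * c - b * e) _ _ = B
  generalize (a * c) ^ (2 * k) = Q
  rw [hμ, two_mul A, two_mul B]
  simp only [← smul_eq_C_mul]
  module
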